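/- arXiv:2301.12625 — 4 statements merged into one kernel-verified Lean document; each statement's English description precedes it below -/
import Mathlib

section
/- Let A be a complete non-archimedean normed (possibly non-unital, non-associative) ring and let d : A → A be a contracting additive endomorphism. Let y ∈ A satisfy d(y·z) = y·(d z) for all z ∈ A (this is what the graded Leibniz rule gives for a closed element of even degree). If ‖y‖ < 1 and there exists α ∈ A with y − y·y = d α, then there exists β ∈ A with y = d β. (This is the chain-level form, i.e. the contrapositive, of the paper's key algebraic lemma: in a complete valued chain complex with product structure satisfying the Leibniz rule, any degree-0 chain-level representative of a nonzero idempotent in homology has non-positive valuation, i.e. norm at least 1.) -/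
/-- Chain-level form of the key algebraic lemma: in a complete non-archimedean
normed (possibly non-unital, non-associative) ring `A` with a contracting
additive endomorphism `d` such that `d (y·z) = y·(d z)` for all `z`,
if `‖y‖ < 1` and `y - y·y` is exact, then `y` is exact. -/
theorem idempotent_representative_of_small_norm_is_exact
    {A : Type*} [NormedAddCommGroup A] [CompleteSpace A]
    (ultra : ∀ x y : A, ‖x + y‖ ≤ max ‖x‖ ‖y‖)
    (mul : A → A → A)
    (left_distrib : ∀ x y z : A, mul x (y + z) = mul x y + mul x z)
    (right_distrib : ∀ x y z : A, mul (x + y) z = mul x z + mul y z)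
    (norm_mul_le : ∀ x y : A, ‖mul x y‖ ≤ ‖x‖ * ‖y‖)
    (d : A → A)
    (d_add : ∀ x y : A, d (x + y) = d x + d y)
    (d_contracting : ∀ x : A, ‖d x‖ ≤ ‖x‖)
    (y : A)
    (hLeibniz : ∀ z : A, d (mul y z) = mul y (d z))
    (hy : ‖y‖ < 1)
    (α : A) (hα : y - mul y y = d α) :
    ∃ β : A, y = d β := by
  have mul_sub (x z w : A) : mul x (z - w) = mul x z - mul x w := by
    rw [eq_sub_iff_add_eq, ← left_distrib, sub_add_cancel]
  have hcontr : ContractingWith ‖y‖₊ (fun z => α + mul y z) := by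
    refine ⟨by exact_mod_cast hy, LipschitzWith.of_dist_le_mul fun z w => ?_⟩
    rw [dist_add_left, dist_eq_norm, dist_eq_norm, ← mul_sub]
    exact norm_mul_le y (z - w)
  obtain ⟨β, hβ⟩ : ∃ β, α + mul y β = β := ⟨_, hcontr.fixedPoint_isFixedPt⟩
  refine ⟨β, ?_⟩
  have hdβ : d β = y - mul y y + mul y (d β) := by
    rw [hα, ← hLeibniz, ← d_add, hβ]
  have hfix : y - d β = mul y (y - d β) := by
    rw [mul_sub]
    nth_rewrite 1 [hdβ]
    abel
  have hle : ‖y - d β‖ ≤ ‖y‖ * ‖y - d β‖ := by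
    conv_lhs => rw [hfix]
    exact norm_mul_le _ _
  have hnorm : ‖y - d β‖ = 0 := by
    nlinarith [norm_nonneg (y - d β)]
  exact sub_eq_zero.mp (norm_eq_zero.mp hnorm)
end

section
/- Let A be a complete non-archimedean normed (possibly non-unital, non-associative) ring and let d : A → A be a contracting additive endomorphism. Let y ∈ A satisfy d(y·z) = y·(d z) for all z ∈ A. If ‖y‖ < 1 and x ∈ A is such that y·x − x = d α for some α ∈ A, then there exists β ∈ A with x = d β. (This is the chain-level form of the paper's finer algebraic lemma in the unit-eigenvalue case λ = 1: if b·a = a in the homology of a complete valued chain complex with product structure and b has a chain representative of positive valuation, then a = 0.) -/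
/-- Chain-level form of the finer algebraic lemma (unit-eigenvalue case `λ = 1`):
in a complete non-archimedean normed (possibly non-unital, non-associative) ring
`A` with a contracting additive endomorphism `d` such that `d (y·z) = y·(d z)`
for all `z`, if `‖y‖ < 1` and `y·x - x` is exact, then `x` is exact. -/
theorem eigen_representative_is_exact_of_small_norm
    {A : Type*} [NormedAddCommGroup A] [CompleteSpace A]
    (ultra : ∀ x y : A, ‖x + y‖ ≤ max ‖x‖ ‖y‖)
    (mul : A → A → A)
    (left_distrib : ∀ x y z : A, mul x (y + z) = mul x y + mul x z)
    (right_distrib : ∀ x y z : A, mul (x + y) z = mul x z + mul y z)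
    (norm_mul_le : ∀ x y : A, ‖mul x y‖ ≤ ‖x‖ * ‖y‖)
    (d : A → A)
    (d_add : ∀ x y : A, d (x + y) = d x + d y)
    (d_contracting : ∀ x : A, ‖d x‖ ≤ ‖x‖)
    (y : A)
    (hLeibniz : ∀ z : A, d (mul y z) = mul y (d z))
    (hy : ‖y‖ < 1)
    (x α : A) (hα : mul y x - x = d α) :
    ∃ β : A, x = d β := by
  have mul_sub (u v : A) : mul y (u - v) = mul y u - mul y v :=
    (AddMonoidHom.mk' (mul y) (left_distrib y)).map_sub u v
  have d_sub (u v : A) : d (u - v) = d u - d v := (AddMonoidHom.mk' d d_add).map_sub u v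
  have contracting : ContractingWith ‖y‖₊ fun z => mul y z - α :=
    ⟨hy, LipschitzWith.of_dist_le_mul fun u v => by
      simpa [dist_eq_norm, mul_sub] using norm_mul_le y (u - v)⟩
  obtain ⟨β, hβ⟩ : ∃ β, mul y β - α = β :=
    ⟨contracting.fixedPoint, contracting.fixedPoint_isFixedPt⟩
  have hdβ : mul y (d β) - d α = d β := by rw [← hLeibniz, ← d_sub, hβ]
  have mul_error : mul y (x - d β) = x - d β := by
    rw [mul_sub, sub_eq_iff_eq_add.mp hα, sub_eq_iff_eq_add.mp hdβ]
    abel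
  refine ⟨β, sub_eq_zero.mp (norm_le_zero_iff.mp ?_)⟩
  have h := norm_mul_le y (x - d β)
  rw [mul_error] at h
  nlinarith
end

section
/- Let K be a normed field and let A be a complete non-archimedean normed (possibly non-unital, non-associative) ring that is simultaneously a normed K-vector space with ‖c • v‖ ≤ ‖c‖·‖v‖, whose scalar action is compatible with the multiplication in the sense that (c • x)·z = c • (x·z) and x·(c • z) = c • (x·z) for all c ∈ K and x, z ∈ A. Let d : A → A be a K-linear map with ‖d v‖ ≤ ‖v‖ for all v. Let y ∈ A satisfy d(y·z) = y·(d z) for all z ∈ A, let λ ∈ K be nonzero with ‖y‖ < ‖λ‖, and suppose x, α ∈ A satisfy y·x − λ • x = d α. Then there exists β ∈ A with x = d β. (This is the chain-level form of the paper's finer algebraic lemma: if classes a, b in the homology of a complete valued chain complex with product structure satisfy b·a = λ·a with λ an invertible scalar, and b has a chain representative of valuation larger than val(λ), then a = 0.) -/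
/-- Chain-level form of the finer algebraic lemma: let `A` be a complete
non-archimedean normed (possibly non-unital, non-associative) ring which is
simultaneously a normed `K`-vector space over a normed field `K`, with the
scalar action compatible with the multiplication, and let `d : A → A` be a
`K`-linear norm non-increasing map with `d (y·z) = y·(d z)` for all `z`.
If `λ ≠ 0`, `‖y‖ < ‖λ‖` and `y·x - λ • x` is exact, then `x` is exact. -/
theorem eigen_representative_is_exact_of_norm_lt
    {K : Type*} [NormedField K]
    {A : Type*} [NormedAddCommGroup A] [Module K A] [CompleteSpace A]
    (ultra : ∀ x y : A, ‖x + y‖ ≤ max ‖x‖ ‖y‖)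
    (norm_smul_le : ∀ (c : K) (v : A), ‖c • v‖ ≤ ‖c‖ * ‖v‖)
    (mul : A → A → A)
    (left_distrib : ∀ x y z : A, mul x (y + z) = mul x y + mul x z)
    (right_distrib : ∀ x y z : A, mul (x + y) z = mul x z + mul y z)
    (norm_mul_le : ∀ x y : A, ‖mul x y‖ ≤ ‖x‖ * ‖y‖)
    (smul_mul : ∀ (c : K) (x z : A), mul (c • x) z = c • mul x z)
    (mul_smul : ∀ (c : K) (x z : A), mul x (c • z) = c • mul x z)
    (d : A → A)
    (d_add : ∀ x y : A, d (x + y) = d x + d y)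
    (d_smul : ∀ (c : K) (v : A), d (c • v) = c • d v)
    (d_contracting : ∀ v : A, ‖d v‖ ≤ ‖v‖)
    (y : A)
    (hLeibniz : ∀ z : A, d (mul y z) = mul y (d z))
    (lam : K) (hlam : lam ≠ 0)
    (hy : ‖y‖ < ‖lam‖)
    (x α : A) (hα : mul y x - lam • x = d α) :
    ∃ β : A, x = d β := by
  let mulY : A →+ A := AddMonoidHom.mk' (mul y) (left_distrib y)
  let dHom : A →+ A := AddMonoidHom.mk' d d_add
  have mul_sub (u v : A) : mul y (u - v) = mul y u - mul y v := map_sub mulY u v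
  have d_sub (u v : A) : d (u - v) = d u - d v := map_sub dHom u v
  have lam_pos : 0 < ‖lam‖ := norm_pos_iff.mpr hlam
  -- Solutions of `y·z - λ • z = γ` are the fixed points of `z ↦ λ⁻¹ • (y·z - γ)`.
  have contracting (γ : A) :
      ContractingWith (‖lam‖₊⁻¹ * ‖y‖₊) (fun z => lam⁻¹ • (mul y z - γ)) := by
    refine ⟨?_, LipschitzWith.of_dist_le_mul fun u v => ?_⟩
    · rw [← NNReal.coe_lt_coe]
      push_cast
      rwa [inv_mul_lt_iff₀ lam_pos, mul_one]
    · rw [dist_eq_norm, dist_eq_norm, ← smul_sub, sub_sub_sub_cancel_right, ← mul_sub]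
      push_cast
      rw [mul_assoc, ← norm_inv]
      exact (norm_smul_le _ _).trans (by gcongr; exact norm_mul_le _ _)
  have fixed_d : Function.IsFixedPt (fun z => lam⁻¹ • (mul y z - d α))
      (d (contracting α).fixedPoint) := by
    have h : lam⁻¹ • (mul y (contracting α).fixedPoint - α) = (contracting α).fixedPoint :=
      (contracting α).fixedPoint_isFixedPt
    change lam⁻¹ • (mul y (d (contracting α).fixedPoint) - d α) = _
    rw [← hLeibniz, ← d_sub, ← d_smul, h]
  have fixed_x : Function.IsFixedPt (fun z => lam⁻¹ • (mul y z - d α)) x := by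
    change lam⁻¹ • (mul y x - d α) = x
    rw [← hα, sub_sub_cancel, inv_smul_smul₀ hlam]
  exact ⟨_, (contracting (d α)).fixedPoint_unique' fixed_x fixed_d⟩
end

section
/- Let A be a complete non-archimedean normed (possibly non-unital, non-associative) ring and let d : A → A be a contracting additive endomorphism with d ∘ d = 0 that satisfies the Leibniz rule d(x·z) = (d x)·z + x·(d z) for all x, z ∈ A. Suppose there exists e ∈ A with d e = 0 and ‖e‖ < 1 such that for every z ∈ A with d z = 0 the element e·z − z lies in the range of d (i.e. the class of e acts as a left unit on the homology of (A, d)). Then every z ∈ A with d z = 0 lies in the range of d; that is, the homology of (A, d) vanishes. (This is the abstract algebraic core of the paper's Proposition that the vanishing of reduced relative symplectic cohomology SH^red_M(K;Λ) = 0 — equivalently, that the unit of SH_M(K;Λ) has infinite valuation, hence admits chain representatives of arbitrarily small norm — implies SH_M(K;Λ) = 0.) -/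
/-- Abstract algebraic core of the proposition that vanishing of reduced
relative symplectic cohomology implies vanishing of relative symplectic
cohomology: if a complete non-archimedean normed (possibly non-unital,
non-associative) ring `A` carries a contracting additive differential `d`
with `d ∘ d = 0` satisfying the Leibniz rule, and there is a closed element
`e` with `‖e‖ < 1` acting as a left unit on homology (i.e. `e·z - z` is
exact for every closed `z`), then every closed element is exact. -/
theorem homology_vanishes_of_small_unit
    {A : Type*} [NormedAddCommGroup A] [CompleteSpace A]
    (ultra : ∀ x y : A, ‖x + y‖ ≤ max ‖x‖ ‖y‖)
    (mul : A → A → A)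
    (left_distrib : ∀ x y z : A, mul x (y + z) = mul x y + mul x z)
    (right_distrib : ∀ x y z : A, mul (x + y) z = mul x z + mul y z)
    (norm_mul_le : ∀ x y : A, ‖mul x y‖ ≤ ‖x‖ * ‖y‖)
    (d : A → A)
    (d_add : ∀ x y : A, d (x + y) = d x + d y)
    (d_contracting : ∀ x : A, ‖d x‖ ≤ ‖x‖)
    (d_sq : ∀ x : A, d (d x) = 0)
    (hLeibniz : ∀ x z : A, d (mul x z) = mul (d x) z + mul x (d z))
    (e : A) (he_closed : d e = 0) (he_norm : ‖e‖ < 1)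
    (he_unit : ∀ z : A, d z = 0 → ∃ w : A, mul e z - z = d w) :
    ∀ z : A, d z = 0 → ∃ β : A, z = d β := by
  let L : A →+ A := AddMonoidHom.mk' (mul e) (left_distrib e)
  let D : A →+ A := AddMonoidHom.mk' d d_add
  have mul_sub (x y : A) : mul e (x - y) = mul e x - mul e y := map_sub L x y
  have d_sub (x y : A) : d (x - y) = d x - d y := map_sub D x y
  have zero_mul (x : A) : mul 0 x = 0 := by simpa using right_distrib 0 0 x
  have d_mul (x : A) : d (mul e x) = mul e (d x) := by
    rw [hLeibniz, he_closed, zero_mul, zero_add]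
  intro z hz
  obtain ⟨w, hw⟩ := he_unit z hz
  have contracting : ContractingWith ‖e‖₊ (fun β => mul e β - w) := by
    refine ⟨by exact_mod_cast he_norm, LipschitzWith.of_dist_le_mul fun x y => ?_⟩
    rw [dist_sub_right, dist_eq_norm, dist_eq_norm, ← mul_sub, coe_nnnorm]
    exact norm_mul_le e (x - y)
  obtain ⟨β, hβ, -⟩ := contracting.exists_fixedPoint 0 (edist_ne_top _ _)
  replace hβ : mul e β - w = β := hβ
  refine ⟨β, ?_⟩
  have fixed : mul e (z - d β) = z - d β := by
    have h := congrArg d hβ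
    rw [d_sub, d_mul, ← hw] at h
    rw [mul_sub]
    nth_rewrite 2 [← h]
    abel
  have h := norm_mul_le e (z - d β)
  rw [fixed] at h
  exact sub_eq_zero.mp (norm_le_zero_iff.mp (by nlinarith [norm_nonneg (z - d β)]))
end
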